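/- Let Π be a probability distribution on ℝ^d with density π(θ) = Z_Π^{-1} exp(−f(θ)), let α ∈ (0, +∞), let C be a symmetric positive-definite d×d matrix, let θ* be the unique maximum of π, and let the MHI proposal be N_d(θ*, α^{-1}C). Set ε_{θ*} = (2π)^{−d/2} α^{d/2} det(C)^{−1/2} Z_Π exp(f(θ*)). If f(θ) ≥ f(θ*) + (α/2)(θ − θ*)ᵀ C^{-1} (θ − θ*) for all θ ∈ ℝ^d, then for every lower semicontinuous metric ρ and every t ≥ 1, W_ρ(P^t(θ*,·), Π) = (1 − ε_{θ*})^t ∫_{ℝ^d} ρ(θ, θ*) dΠ(θ). -/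

import Mathlib

open MeasureTheory ENNReal Filter Matrix
open scoped BigOperators NNReal

noncomputable section

/-- The set of couplings of two measures. -/
def couplings {E : Type*} [MeasurableSpace E] (μ ν : Measure E) : Set (Measure (E × E)) :=
  {ξ | ξ.map Prod.fst = μ ∧ ξ.map Prod.snd = ν}

/-- The `L₁` Wasserstein (transportation) distance with cost `ρ`, valued in `ℝ≥0∞`:
`W_ρ(μ, ν) = inf over couplings ξ of ∫ ρ dξ`. -/
def wassersteinDist {E : Type*} [MeasurableSpace E] (ρ : E → E → ℝ)
    (μ ν : Measure E) : ℝ≥0∞ :=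
  ⨅ ξ ∈ couplings μ ν, ∫⁻ p, ENNReal.ofReal (ρ p.1 p.2) ∂ξ

/-- `ρ` is a lower semicontinuous metric on the set `Θ`. -/
def IsLSCMetricOn {E : Type*} [TopologicalSpace E] (Θ : Set E) (ρ : E → E → ℝ) : Prop :=
  LowerSemicontinuousOn (fun p : E × E => ρ p.1 p.2) (Θ ×ˢ Θ) ∧
  (∀ x ∈ Θ, ∀ y ∈ Θ, 0 ≤ ρ x y) ∧ (∀ x ∈ Θ, ρ x x = 0) ∧
  (∀ x ∈ Θ, ∀ y ∈ Θ, ρ x y = 0 → x = y) ∧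
  (∀ x ∈ Θ, ∀ y ∈ Θ, ρ x y = ρ y x) ∧
  (∀ x ∈ Θ, ∀ y ∈ Θ, ∀ z ∈ Θ, ρ x z ≤ ρ x y + ρ y z)

/-- Metropolis–Hastings acceptance ratio for target density `π` and proposal density `q`. -/
def mhAccept {E : Type*} (π : E → ℝ) (q : E → E → ℝ) (θ θ' : E) : ℝ :=
  if 0 < π θ * q θ θ' then min (π θ' * q θ' θ / (π θ * q θ θ')) 1 else 1

/-- Metropolis–Hastings overall acceptance probability `A(θ)`. -/
def mhAcceptProb {E : Type*} [MeasureSpace E] (Θ : Set E) (π : E → ℝ) (q : E → E → ℝ)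
    (θ : E) : ℝ :=
  ∫ θ' in Θ, mhAccept π q θ θ' * q θ θ'

/-- The Metropolis–Hastings Markov kernel
`P(θ, B) = ∫_B a(θ,θ') q(θ,θ') dθ' + δ_θ(B) (1 - A(θ))`. -/
def mhKernel {E : Type*} [MeasureSpace E] (Θ : Set E) (π : E → ℝ) (q : E → E → ℝ)
    (θ : E) : Measure E :=
  (volume.restrict Θ).withDensity (fun θ' => ENNReal.ofReal (mhAccept π q θ θ' * q θ θ')) +
    (ENNReal.ofReal (1 - mhAcceptProb Θ π q θ)) • Measure.dirac θ

/-- `t`-fold iterate `P^t` of a Markov kernel, with `P^0(θ, ·) = δ_θ`. -/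
def kernelIter {E : Type*} [MeasurableSpace E] (P : E → Measure E) : ℕ → E → Measure E
  | 0, θ => Measure.dirac θ
  | (t + 1), θ => (P θ).bind (kernelIter P t)


/-- Acceptance ratio for the Metropolis–Hastings independence (MHI) algorithm, whose
proposal density `q` does not depend on the current state. -/
def mhiAccept {E : Type*} (π : E → ℝ) (q : E → ℝ) (θ θ' : E) : ℝ :=
  if 0 < π θ * q θ' then min (π θ' * q θ / (π θ * q θ')) 1 else 1

/-- Overall acceptance probability `A(θ)` for the MHI algorithm. -/
def mhiAcceptProb {E : Type*} [MeasureSpace E] (Θ : Set E) (π : E → ℝ) (q : E → ℝ)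
    (θ : E) : ℝ :=
  ∫ θ' in Θ, mhiAccept π q θ θ' * q θ'

/-- The MHI Markov kernel
`P(θ, B) = ∫_B a(θ,θ') q(θ') dθ' + δ_θ(B) (1 - A(θ))`. -/
def mhiKernel {E : Type*} [MeasureSpace E] (Θ : Set E) (π : E → ℝ) (q : E → ℝ)
    (θ : E) : Measure E :=
  (volume.restrict Θ).withDensity (fun θ' => ENNReal.ofReal (mhiAccept π q θ θ' * q θ')) +
    (ENNReal.ofReal (1 - mhiAcceptProb Θ π q θ)) • Measure.dirac θ


/-- Density of the `d`-dimensional Gaussian distribution `N_d(m, α⁻¹ C)`. -/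
def gaussDensity {d : ℕ} (m : Fin d → ℝ) (α : ℝ) (C : Matrix (Fin d) (Fin d) ℝ)
    (θ : Fin d → ℝ) : ℝ :=
  (2 * Real.pi) ^ (-(d : ℝ) / 2) * α ^ ((d : ℝ) / 2) * C.det ^ (-(1 : ℝ) / 2) *
    Real.exp (-(α / 2) * ((θ - m) ⬝ᵥ (C⁻¹ *ᵥ (θ - m))))

end

/-!
The proposal dominates the target: the quadratic minorization of `f` at `θ*` is the same as
`q ≥ ε π`, and equality holds at `θ*`. Started at `θ*`, an accepted move therefore has density
`min (π(θ') q(θ*) / π(θ*)) (q(θ')) = ε π(θ')`, that is, `P(θ*, ·) = ε Π + (1 - ε) δ_{θ*}`.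
Since `Π` is invariant (`bind_mhiKernel`), iteration gives
`P^t(θ*, ·) = (1 - (1 - ε)^t) Π + (1 - ε)^t δ_{θ*}` (`kernelIter_eq`). The transport cost of such a
mixture to `Π` is computed exactly in `wassersteinDist_mix`: the diagonal coupling of the common
part is matched by the dual bound with the potential `ρ(θ*, ·)`.

The Gaussian normalization `∫ q = 1` (`integral_gaussDensity`) is what makes the kernel Markov; it
also gives `ε ≤ 1`, by integrating `ε π ≤ q`.
-/

/-! ### Normalization of the Gaussian proposal -/

section Gaussian

/-- A symmetric positive-definite precision matrix factors as `Bᵀ B`, so the Gaussian quadratic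
form is a squared Euclidean norm after the linear change of variables `B`. -/
lemma exists_factor_inv {d : ℕ} {C : Matrix (Fin d) (Fin d) ℝ} (hC : C.PosDef) :
    ∃ B : Matrix (Fin d) (Fin d) ℝ, C⁻¹ = Bᵀ * B ∧ |B.det| = C.det ^ (-(1 : ℝ) / 2) := by
  have hCi : C⁻¹.PosSemidef := hC.inv.posSemidef
  obtain ⟨B, hB⟩ : ∃ B : Matrix (Fin d) (Fin d) ℝ, C⁻¹ = Bᵀ * B := by
    open scoped MatrixOrder in
    obtain ⟨B, hB⟩ := CStarAlgebra.nonneg_iff_eq_star_mul_self.mp hCi.nonneg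
    exact ⟨B, by rw [hB, star_eq_conjTranspose, conjTranspose_eq_transpose_of_trivial]⟩
  refine ⟨B, hB, ?_⟩
  have hdet : C.det⁻¹ = B.det ^ 2 := by
    have := congrArg Matrix.det hB
    rw [det_mul, det_transpose, det_nonsing_inv, Ring.inverse_eq_inv'] at this
    rw [this, sq]
  have h0 : 0 < C.det := hC.det_pos
  rw [← Real.sqrt_sq_eq_abs, ← hdet, Real.sqrt_eq_rpow, Real.inv_rpow h0.le,
    ← Real.rpow_neg h0.le]
  norm_num

lemma integral_exp_neg_dotProduct {d : ℕ} {α : ℝ} :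
    ∫ y : Fin d → ℝ, Real.exp (-(α / 2) * (y ⬝ᵥ y)) = √(2 * Real.pi / α) ^ d := by
  have h : ∀ y : Fin d → ℝ, Real.exp (-(α / 2) * (y ⬝ᵥ y)) =
      ∏ i, Real.exp (-(α / 2) * (y i) ^ 2) := by
    intro y
    rw [← Real.exp_sum, dotProduct, Finset.mul_sum]
    simp only [sq]
  simp_rw [h]
  rw [integral_fintype_prod_volume_eq_pow (fun x : ℝ => Real.exp (-(α / 2) * x ^ 2)),
    integral_gaussian, Fintype.card_fin]
  congr 2
  rw [div_div_eq_mul_div, mul_comm]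

lemma integral_gaussDensity {d : ℕ} (m : Fin d → ℝ) {α : ℝ} (hα : 0 < α)
    {C : Matrix (Fin d) (Fin d) ℝ} (hC : C.PosDef) : ∫ θ, gaussDensity m α C θ = 1 := by
  obtain ⟨B, hB, hdet⟩ := exists_factor_inv hC
  have hBpos : 0 < |B.det| := hdet ▸ Real.rpow_pos_of_pos hC.det_pos _
  have hB0 : B.det ≠ 0 := abs_pos.mp hBpos
  have hquad : ∀ x : Fin d → ℝ, x ⬝ᵥ (C⁻¹ *ᵥ x) = (toLin' B x) ⬝ᵥ (toLin' B x) := by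
    intro x
    rw [hB, toLin'_apply, ← mulVec_mulVec, dotProduct_mulVec, vecMul_transpose]
  have hmeas : Measurable (toLin' B) := (LinearMap.continuous_of_finiteDimensional _).measurable
  simp only [gaussDensity]
  rw [integral_const_mul]
  simp_rw [hquad]
  rw [integral_sub_right_eq_self
    (fun x : Fin d → ℝ => Real.exp (-(α / 2) * ((toLin' B x) ⬝ᵥ (toLin' B x)))) m]
  have hmap := integral_map (μ := (volume : Measure (Fin d → ℝ))) hmeas.aemeasurable
    (f := fun y : Fin d → ℝ => Real.exp (-(α / 2) * (y ⬝ᵥ y)))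
    (by apply Continuous.aestronglyMeasurable; simp only [dotProduct]; fun_prop)
  rw [← hmap, Real.map_matrix_volume_pi_eq_smul_volume_pi hB0, integral_smul_measure,
    integral_exp_neg_dotProduct, ENNReal.toReal_ofReal (abs_nonneg _), ← hdet, abs_inv, smul_eq_mul]
  have hs : √(2 * Real.pi / α) ^ d = (2 * Real.pi) ^ ((d : ℝ) / 2) * α ^ (-(d : ℝ) / 2) := by
    rw [Real.sqrt_eq_rpow, ← Real.rpow_natCast, ← Real.rpow_mul (by positivity),
      Real.div_rpow (by positivity) hα.le, div_eq_mul_inv, ← Real.rpow_neg hα.le]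
    congr 2 <;> ring
  rw [hs]
  have h1 : (2 * Real.pi) ^ (-(d : ℝ) / 2) * (2 * Real.pi) ^ ((d : ℝ) / 2) = 1 := by
    rw [← Real.rpow_add (by positivity)]; ring_nf; simp
  have h2 : α ^ ((d : ℝ) / 2) * α ^ (-(d : ℝ) / 2) = 1 := by
    rw [← Real.rpow_add hα]; ring_nf; simp
  calc _ = ((2 * Real.pi) ^ (-(d : ℝ) / 2) * (2 * Real.pi) ^ ((d : ℝ) / 2)) *
        (α ^ ((d : ℝ) / 2) * α ^ (-(d : ℝ) / 2)) * (|B.det| * |B.det|⁻¹) := by ring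
    _ = 1 := by rw [h1, h2, mul_inv_cancel₀ hBpos.ne']; norm_num

lemma gaussDensity_pos {d : ℕ} (m : Fin d → ℝ) {α : ℝ} (hα : 0 < α)
    {C : Matrix (Fin d) (Fin d) ℝ} (hC : C.PosDef) (θ : Fin d → ℝ) :
    0 < gaussDensity m α C θ := by
  have := Real.rpow_pos_of_pos hC.det_pos (-(1 : ℝ) / 2)
  unfold gaussDensity
  positivity

lemma measurable_gaussDensity {d : ℕ} (m : Fin d → ℝ) (α : ℝ)
    (C : Matrix (Fin d) (Fin d) ℝ) : Measurable (gaussDensity m α C) := by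
  have : Continuous (gaussDensity m α C) := by
    unfold gaussDensity
    simp only [dotProduct, mulVec]
    fun_prop
  exact this.measurable

end Gaussian

/-! ### The MHI kernel and its invariant law -/

section MHI

lemma mhiAccept_mul {E : Type*} {p q : E → ℝ} (hp : ∀ x, 0 < p x) (hq : ∀ x, 0 < q x) (x y : E) :
    mhiAccept p q x y * q y = min (p y * q x / p x) (q y) := by
  have h1 := hp x
  have h2 := hq y
  rw [mhiAccept, if_pos (by positivity), min_mul_of_nonneg _ _ h2.le, one_mul]
  congr 1
  field_simp

variable {E : Type*} [MeasureSpace E] {p q : E → ℝ}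

/-- The unaccepted mass is expressed through a lower Lebesgue integral; this needs the total
proposal mass to be at most one, so that `1 - A(x)` is not truncated. -/
lemma mhiKernel_eq (hp : ∀ x, 0 < p x) (hq : ∀ x, 0 < q x) (hpm : Measurable p)
    (hqm : Measurable q) (hqi : Integrable q) (x : E) :
    mhiKernel Set.univ p q x =
      volume.withDensity (fun y => ENNReal.ofReal (min (p y * q x / p x) (q y))) +
      (1 - ∫⁻ y, ENNReal.ofReal (min (p y * q x / p x) (q y))) • Measure.dirac x := by
  have hnn : ∀ y, 0 ≤ min (p y * q x / p x) (q y) := fun y =>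
    le_min (by have := hp x; have := hp y; have := hq x; positivity) (hq y).le
  have hint : Integrable fun y => min (p y * q x / p x) (q y) := by
    refine hqi.mono' (by fun_prop) (Eventually.of_forall fun y => ?_)
    rw [Real.norm_of_nonneg (hnn y)]
    exact min_le_right _ _
  simp only [mhiKernel, mhiAcceptProb, mhiAccept_mul hp hq, Measure.restrict_univ]
  rw [ENNReal.ofReal_sub _ (integral_nonneg hnn), ENNReal.ofReal_one,
    ofReal_integral_eq_lintegral_ofReal hint (Eventually.of_forall hnn)]

lemma measurable_mhiKernel [SFinite (volume : Measure E)] (hp : ∀ x, 0 < p x)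
    (hq : ∀ x, 0 < q x) (hpm : Measurable p)
    (hqm : Measurable q) (hqi : Integrable q) : Measurable (mhiKernel Set.univ p q) := by
  have hw : Measurable (Function.uncurry fun x y =>
      ENNReal.ofReal (min (p y * q x / p x) (q y))) := by
    unfold Function.uncurry; fun_prop
  refine Measure.measurable_of_measurable_coe _ fun s hs => ?_
  simp only [mhiKernel_eq hp hq hpm hqm hqi, Measure.add_apply, Measure.smul_apply,
    withDensity_apply _ hs, smul_eq_mul]
  refine hw.lintegral_prod_right'.add (Measurable.mul ?_ ?_)
  · exact measurable_const.sub hw.lintegral_prod_right'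
  · exact (Measure.measurable_coe hs).comp Measure.measurable_dirac

lemma measurable_kernelIter {F : Type*} [MeasurableSpace F] {P : F → Measure F}
    (hP : Measurable P) (t : ℕ) : Measurable (kernelIter P t) := by
  induction t with
  | zero => exact Measure.measurable_dirac
  | succ t ih => exact (Measure.measurable_bind' ih).comp hP

/-- The target is invariant for the MHI kernel. The flux density
`p x * a(x, y) * q y = min (p y * q x) (p x * q y)` is symmetric in `x` and `y`. -/
lemma bind_mhiKernel [SFinite (volume : Measure E)] (hp : ∀ x, 0 < p x)
    (hq : ∀ x, 0 < q x) (hpm : Measurable p)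
    (hqm : Measurable q) (hqi : Integrable q) (hq1 : ∫ x, q x = 1) :
    (volume.withDensity fun x => ENNReal.ofReal (p x)).bind (mhiKernel Set.univ p q) =
      volume.withDensity fun x => ENNReal.ofReal (p x) := by
  have hP := measurable_mhiKernel hp hq hpm hqm hqi
  set m : E → E → ℝ≥0∞ := fun x y => ENNReal.ofReal (min (p y * q x / p x) (q y)) with hm
  have hmm : Measurable (Function.uncurry m) := by
    simp only [hm]; unfold Function.uncurry; fun_prop
  set L : E → ℝ≥0∞ := fun x => ∫⁻ y, m x y with hL
  have hLm : Measurable L := hmm.lintegral_prod_right'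
  have hL1 : ∀ x, L x ≤ 1 := fun x => by
    calc L x ≤ ∫⁻ y, ENNReal.ofReal (q y) :=
          lintegral_mono fun y => ENNReal.ofReal_le_ofReal (min_le_right _ _)
      _ = 1 := by
          rw [← ofReal_integral_eq_lintegral_ofReal hqi (Eventually.of_forall fun y => (hq y).le),
            hq1, ENNReal.ofReal_one]
  have hpm' : Measurable fun x => ENNReal.ofReal (p x) := hpm.ennreal_ofReal
  have hsymm : ∀ x y, ENNReal.ofReal (p x) * m x y = ENNReal.ofReal (p y) * m y x := by
    intro x y
    have h1 := hp x
    have h2 := hp y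
    simp only [hm]
    rw [← ENNReal.ofReal_mul h1.le, ← ENNReal.ofReal_mul h2.le, mul_min_of_nonneg _ _ h1.le,
      mul_min_of_nonneg _ _ h2.le, mul_div_cancel₀ _ h1.ne', mul_div_cancel₀ _ h2.ne', min_comm]
  ext s hs
  have hPs : Measurable fun x => mhiKernel Set.univ p q x s := (Measure.measurable_coe hs).comp hP
  rw [Measure.bind_apply hs hP.aemeasurable,
    lintegral_withDensity_eq_lintegral_mul _ hpm' hPs,
    withDensity_apply _ hs]
  have hpt : ∀ x, ((fun x => ENNReal.ofReal (p x)) * fun x => mhiKernel Set.univ p q x s) x =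
      (∫⁻ y in s, ENNReal.ofReal (p x) * m x y) +
        s.indicator (fun x => ENNReal.ofReal (p x) * (1 - L x)) x := by
    intro x
    have hmx : Measurable (m x) := hmm.comp measurable_prodMk_left
    rw [Pi.mul_apply, mhiKernel_eq hp hq hpm hqm hqi, Measure.add_apply, Measure.smul_apply,
      withDensity_apply _ hs, Measure.dirac_apply' _ hs, mul_add, lintegral_const_mul _ hmx]
    congr 1
    by_cases hx : x ∈ s <;> simp [hx, hL, hm]
  have hu : Measurable (Function.uncurry fun x y => ENNReal.ofReal (p x) * m x y) :=
    (hpm'.comp measurable_fst).mul hmm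
  have hu1 : Measurable fun x => ∫⁻ y in s, ENNReal.ofReal (p x) * m x y :=
    hu.lintegral_prod_right' (ν := volume.restrict s)
  rw [lintegral_congr hpt, lintegral_add_left hu1, lintegral_indicator hs,
    lintegral_lintegral_swap (μ := volume) (ν := volume.restrict s) hu.aemeasurable]
  have hswap : ∀ y, ∫⁻ x, ENNReal.ofReal (p x) * m x y = ∫⁻ x, ENNReal.ofReal (p y) * m y x :=
    fun y => lintegral_congr fun x => hsymm x y
  rw [lintegral_congr hswap]
  have hv : Measurable fun y => ∫⁻ x, ENNReal.ofReal (p y) * m y x := hu.lintegral_prod_right'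
  rw [← lintegral_add_left hv]
  refine lintegral_congr fun x => ?_
  have hmx : Measurable (m x) := hmm.comp measurable_prodMk_left
  rw [lintegral_const_mul _ hmx, ← mul_add]
  change _ * (L x + (1 - L x)) = _
  rw [add_tsub_cancel_of_le (hL1 x), mul_one]

end MHI

/-! ### Iterates of a regenerative kernel -/

section Iterates

variable {E : Type*} [MeasurableSpace E]

lemma bind_kernelIter {P : E → Measure E} (hP : Measurable P) {μ : Measure E}
    (h : μ.bind P = μ) (t : ℕ) : μ.bind (kernelIter P t) = μ := by
  induction t with
  | zero => exact Measure.bind_dirac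
  | succ t ih =>
    have := Measure.bind_bind (m := μ) hP.aemeasurable
      (measurable_kernelIter hP t).aemeasurable
    rw [h, ih] at this
    exact this.symm

/-- If one step from `x` regenerates from the invariant law with probability `e` and otherwise
stays at `x`, then so do `t` steps, the probability of never having left being `(1 - e) ^ t`. -/
lemma kernelIter_eq {P : E → Measure E} (hP : Measurable P) {μ : Measure E}
    (h : μ.bind P = μ) {x : E} {e : ℝ≥0∞} (he : e ≤ 1)
    (hx : P x = e • μ + (1 - e) • Measure.dirac x) (t : ℕ) :
    kernelIter P t x = (1 - (1 - e) ^ t) • μ + ((1 - e) ^ t) • Measure.dirac x := by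
  induction t with
  | zero => simp [kernelIter]
  | succ t ih =>
    have hm := measurable_kernelIter hP t
    have hadd : (P x).bind (kernelIter P t) =
        e • μ.bind (kernelIter P t) + (1 - e) • kernelIter P t x := by
      rw [hx, ← Measure.bind_smul, ← Measure.dirac_bind hm, ← Measure.bind_smul]
      ext s hs
      rw [Measure.add_apply, Measure.bind_apply hs hm.aemeasurable,
        Measure.bind_apply hs hm.aemeasurable, Measure.bind_apply hs hm.aemeasurable,
        lintegral_add_measure]
    rw [kernelIter, hadd, bind_kernelIter hP h, ih, smul_add, smul_smul, smul_smul, ← add_assoc,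
      ← add_smul, pow_succ']
    congr 2
    have hr : (1 - e) ^ t ≤ 1 := pow_le_one₀ zero_le tsub_le_self
    have hne : (1 - e) * (1 - e) ^ t ≠ ∞ :=
      (mul_lt_top (tsub_le_self.trans_lt one_lt_top) (hr.trans_lt one_lt_top)).ne
    refine ENNReal.eq_sub_of_add_eq hne ?_
    rw [add_assoc, ← mul_add, tsub_add_cancel_of_le hr, mul_one, add_tsub_cancel_of_le he]

end Iterates

/-! ### Transport cost from an atomic mixture -/

section Wasserstein

variable {E : Type*} [MeasurableSpace E]

/-- Transport cost of sending the atom of `(1 - r) μ + r δ_x` to `μ`. The upper bound couples the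
common part diagonally. The lower bound integrates the `1`-Lipschitz functions
`y ↦ min (ρ x y) n`; truncation keeps the integrals finite, so the identity also covers
`∫ ρ(·, x) dμ = ∞`. -/
lemma wassersteinDist_mix {ρ : E → E → ℝ} (hρm : Measurable fun z : E × E => ρ z.1 z.2)
    (hself : ∀ x, ρ x x = 0) (hsymm : ∀ x y, ρ x y = ρ y x)
    (htri : ∀ x y z, ρ x z ≤ ρ x y + ρ y z) (μ : Measure E) [IsProbabilityMeasure μ] (x : E)
    {r : ℝ≥0∞} (hr : r ≤ 1) :
    wassersteinDist ρ ((1 - r) • μ + r • Measure.dirac x) μ =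
      r * ∫⁻ y, ENNReal.ofReal (ρ y x) ∂μ := by
  have hm1 : Measurable fun z : E × E => ENNReal.ofReal (ρ z.1 z.2) := hρm.ennreal_ofReal
  have hdiag : Measurable fun y : E => (y, y) := measurable_id.prodMk measurable_id
  have hx : Measurable fun y : E => (x, y) := measurable_prodMk_left
  have hgx : Measurable fun y => ENNReal.ofReal (ρ x y) := hm1.comp hx
  have hcomm : ∫⁻ y, ENNReal.ofReal (ρ y x) ∂μ = ∫⁻ y, ENNReal.ofReal (ρ x y) ∂μ :=
    lintegral_congr fun y => by rw [hsymm]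
  rw [hcomm]
  apply le_antisymm
  · refine (iInf₂_le ((1 - r) • μ.map (fun y => (y, y)) + r • μ.map (fun y => (x, y))) ?_).trans ?_
    · constructor
      · rw [Measure.map_add _ _ measurable_fst, Measure.map_smul, Measure.map_smul,
          Measure.map_map measurable_fst hdiag, Measure.map_map measurable_fst hx]
        simp [Function.comp_def]
      · rw [Measure.map_add _ _ measurable_snd, Measure.map_smul, Measure.map_smul,
          Measure.map_map measurable_snd hdiag, Measure.map_map measurable_snd hx]
        simp only [Function.comp_def, Measure.map_id']
        rw [← add_smul, tsub_add_cancel_of_le hr, one_smul]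
    · rw [lintegral_add_measure, lintegral_smul_measure, lintegral_smul_measure,
        lintegral_map hm1 hdiag, lintegral_map hm1 hx]
      simp [hself]
  · refine le_iInf₂ fun ξ hξ => ?_
    obtain ⟨h1, h2⟩ := hξ
    have key : ∀ n : ℕ, r * ∫⁻ y, min (ENNReal.ofReal (ρ x y)) n ∂μ ≤
        ∫⁻ z, ENNReal.ofReal (ρ z.1 z.2) ∂ξ := by
      intro n
      set g : E → ℝ≥0∞ := fun y => min (ENNReal.ofReal (ρ x y)) n with hg
      have hgm : Measurable g := hgx.min measurable_const
      have hgfin : ∫⁻ y, g y ∂μ ≠ ∞ := by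
        refine ne_top_of_le_ne_top (natCast_ne_top n) ?_
        calc ∫⁻ y, g y ∂μ ≤ ∫⁻ _, (n : ℝ≥0∞) ∂μ := lintegral_mono fun y => min_le_right _ _
          _ = n := by simp
      have hg0 : g x = 0 := by simp [hg, hself]
      have hlip : ∀ z : E × E, g z.2 ≤ g z.1 + ENNReal.ofReal (ρ z.1 z.2) := by
        rintro ⟨a, b⟩
        simp only [hg]
        rw [min_add]
        refine le_min ((min_le_left _ _).trans ?_) ((min_le_right _ _).trans le_self_add)
        exact (ENNReal.ofReal_le_ofReal (htri x a b)).trans ENNReal.ofReal_add_le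
      have hsnd : ∫⁻ z, g z.2 ∂ξ = ∫⁻ y, g y ∂μ := by
        rw [← h2, lintegral_map hgm measurable_snd]
      have hfst : ∫⁻ z, g z.1 ∂ξ = (1 - r) * ∫⁻ y, g y ∂μ := by
        rw [← lintegral_map hgm measurable_fst, h1, lintegral_add_measure, lintegral_smul_measure,
          lintegral_smul_measure, lintegral_dirac' _ hgm, hg0]
        simp
      have hle : ∫⁻ y, g y ∂μ ≤
          (1 - r) * ∫⁻ y, g y ∂μ + ∫⁻ z, ENNReal.ofReal (ρ z.1 z.2) ∂ξ := by
        have hgm1 : Measurable fun z : E × E => g z.1 := hgm.comp measurable_fst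
        rw [← hfst, ← hsnd, ← lintegral_add_left hgm1]
        exact lintegral_mono hlip
      have hsplit : ∫⁻ y, g y ∂μ = (1 - r) * ∫⁻ y, g y ∂μ + r * ∫⁻ y, g y ∂μ := by
        rw [← add_mul, tsub_add_cancel_of_le hr, one_mul]
      have hfin : (1 - r) * ∫⁻ y, g y ∂μ ≠ ∞ :=
        mul_ne_top (tsub_le_self.trans_lt one_lt_top).ne hgfin
      exact (ENNReal.add_le_add_iff_left hfin).mp (hsplit ▸ hle)
    have hsup : ∫⁻ y, ENNReal.ofReal (ρ x y) ∂μ =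
        ⨆ n : ℕ, ∫⁻ y, min (ENNReal.ofReal (ρ x y)) n ∂μ := by
      rw [← lintegral_iSup (fun n => hgx.min measurable_const)
        (fun i j hij y => min_le_min_left _ (by exact_mod_cast hij))]
      refine lintegral_congr fun y => le_antisymm ?_ (iSup_le fun n => min_le_left _ _)
      obtain ⟨n, hn⟩ := exists_nat_gt (ρ x y)
      refine le_iSup_of_le n (le_min le_rfl ?_)
      rw [← ENNReal.ofReal_natCast]
      exact ENNReal.ofReal_le_ofReal hn.le
    rw [hsup, ENNReal.mul_iSup]
    exact iSup_le key

end Wasserstein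

/-! ### The exact rate -/

open Real in
/-- Proposition 4.2, exact rate for the centered Gaussian MHI algorithm.
Target density `π(θ) = Z⁻¹ exp(-f(θ))` on `ℝ^d`, proposal `N_d(θ*, α⁻¹ C)` centered at the
unique maximum `θ*` of `π`. If `f(θ) ≥ f(θ*) + (α/2)(θ-θ*)ᵀ C⁻¹ (θ-θ*)` for all `θ`, then
with `ε = (2π)^{-d/2} α^{d/2} det(C)^{-1/2} Z exp(f(θ*))`, for every lower semicontinuous
metric `ρ` and every `t ≥ 1`,
`W_ρ(P^t(θ*,·), Π) = (1 - ε)^t ∫ ρ(θ, θ*) dΠ(θ)`. -/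
theorem mhi_centered_gaussian_exact_rate
    {d : ℕ} (f : (Fin d → ℝ) → ℝ) (hfmeas : Measurable f)
    (Z : ℝ) (hZ : 0 < Z)
    -- `π = Z⁻¹ exp(-f)` is a probability density on `ℝ^d`
    (Pi : Measure (Fin d → ℝ)) [IsProbabilityMeasure Pi]
    (hPi : Pi = volume.withDensity fun θ => ENNReal.ofReal (Z⁻¹ * Real.exp (-f θ)))
    (α : ℝ) (hα : 0 < α)
    (C : Matrix (Fin d) (Fin d) ℝ) (hCsymm : C.IsSymm) (hCpd : C.PosDef)
    -- `θ*` is the unique maximum of `π`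
    (θstar : Fin d → ℝ) (hθstar : ∀ θ, θ ≠ θstar → f θstar < f θ)
    -- quadratic minorization of `f` at `θ*`
    (hquad : ∀ θ, f θstar + α / 2 * ((θ - θstar) ⬝ᵥ (C⁻¹ *ᵥ (θ - θstar))) ≤ f θ) :
    ∀ ρ : (Fin d → ℝ) → (Fin d → ℝ) → ℝ, IsLSCMetricOn Set.univ ρ →
      ∀ t : ℕ, 1 ≤ t →
        wassersteinDist ρ
            (kernelIter
              (mhiKernel Set.univ (fun θ => Z⁻¹ * Real.exp (-f θ)) (gaussDensity θstar α C))
              t θstar) Pi =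
          ENNReal.ofReal
              ((1 - (2 * Real.pi) ^ (-(d : ℝ) / 2) * α ^ ((d : ℝ) / 2) *
                  C.det ^ (-(1 : ℝ) / 2) * Z * Real.exp (f θstar)) ^ t) *
            ∫⁻ θ, ENNReal.ofReal (ρ θ θstar) ∂Pi := by
  intro ρ ⟨hlsc, _, hself, _, hsymm, htri⟩ t _
  simp only [Set.mem_univ, forall_true_left] at hself hsymm htri
  rw [Set.univ_prod_univ, lowerSemicontinuousOn_univ_iff] at hlsc
  set p : (Fin d → ℝ) → ℝ := fun θ => Z⁻¹ * Real.exp (-f θ) with hp_def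
  set q := gaussDensity θstar α C with hq_def
  set ε : ℝ := (2 * Real.pi) ^ (-(d : ℝ) / 2) * α ^ ((d : ℝ) / 2) *
    C.det ^ (-(1 : ℝ) / 2) * Z * Real.exp (f θstar) with hε
  have hdet := Real.rpow_pos_of_pos hCpd.det_pos (-(1 : ℝ) / 2)
  have hp : ∀ θ, 0 < p θ := fun θ => by positivity
  have hq : ∀ θ, 0 < q θ := gaussDensity_pos θstar hα hCpd
  have hpm : Measurable p := by fun_prop
  have hqm : Measurable q := measurable_gaussDensity θstar α C
  have hq1 : ∫ θ, q θ = 1 := integral_gaussDensity θstar hα hCpd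
  have hqi : Integrable q := by
    by_contra h
    rw [integral_undef h] at hq1
    exact zero_ne_one hq1
  have hε0 : 0 ≤ ε := by positivity
  have hratio : q θstar / p θstar = ε := by
    simp only [hq_def, hp_def, gaussDensity, sub_self, zero_dotProduct, mul_zero, Real.exp_zero,
      mul_one, hε, Real.exp_neg]
    field_simp
  -- the quadratic minorization of `f` says exactly that `ε * p ≤ q`
  have hdom : ∀ θ, ε * p θ ≤ q θ := by
    intro θ
    have hexp : Real.exp (f θstar) * Real.exp (-f θ) ≤
        Real.exp (-(α / 2) * ((θ - θstar) ⬝ᵥ (C⁻¹ *ᵥ (θ - θstar)))) := by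
      rw [← Real.exp_add]
      exact Real.exp_le_exp.mpr (by linarith [hquad θ])
    calc ε * p θ = (2 * Real.pi) ^ (-(d : ℝ) / 2) * α ^ ((d : ℝ) / 2) *
          C.det ^ (-(1 : ℝ) / 2) * (Real.exp (f θstar) * Real.exp (-f θ)) := by
            simp only [hε, hp_def]; field_simp
      _ ≤ _ := mul_le_mul_of_nonneg_left hexp (by positivity)
  have hw : ∀ θ, min (p θ * q θstar / p θstar) (q θ) = ε * p θ := by
    intro θ
    rw [mul_div_assoc, hratio, mul_comm, min_eq_left (hdom θ)]
  have hpm' : Measurable fun θ => ENNReal.ofReal (p θ) := hpm.ennreal_ofReal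
  have hp1 : ∫⁻ θ, ENNReal.ofReal (p θ) = 1 := by
    rw [← setLIntegral_univ, ← withDensity_apply _ MeasurableSet.univ, ← hPi, measure_univ]
  have hlint : ∫⁻ θ, ENNReal.ofReal (ε * p θ) = ENNReal.ofReal ε := by
    simp_rw [ENNReal.ofReal_mul hε0]
    rw [lintegral_const_mul _ hpm', hp1, mul_one]
  have hε1 : ENNReal.ofReal ε ≤ 1 := by
    rw [← hlint, ← ENNReal.ofReal_one, ← hq1,
      ofReal_integral_eq_lintegral_ofReal hqi (Eventually.of_forall fun y => (hq y).le)]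
    exact lintegral_mono fun θ => ENNReal.ofReal_le_ofReal (hdom θ)
  have hstep : mhiKernel Set.univ p q θstar =
      ENNReal.ofReal ε • Pi + (1 - ENNReal.ofReal ε) • Measure.dirac θstar := by
    rw [mhiKernel_eq hp hq hpm hqm hqi]
    simp_rw [hw]
    rw [hlint, hPi, ← withDensity_smul _ hpm']
    congr 2
    funext θ
    exact ENNReal.ofReal_mul hε0
  have hinv : Pi.bind (mhiKernel Set.univ p q) = Pi := by
    rw [hPi]
    exact bind_mhiKernel hp hq hpm hqm hqi hq1
  rw [kernelIter_eq (measurable_mhiKernel hp hq hpm hqm hqi) hinv hε1 hstep,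
    wassersteinDist_mix hlsc.measurable hself hsymm htri Pi θstar
      (pow_le_one₀ zero_le tsub_le_self),
    ENNReal.ofReal_pow (sub_nonneg.mpr (ENNReal.ofReal_le_one.mp hε1)),
    ENNReal.ofReal_sub _ hε0, ENNReal.ofReal_one]
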